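/- Marginalisation of the latent-layer outputs of the other datapoints: in the N-point layered setup below, fix an index n ∈ {1, …, N} and suppose that for every layer l the n-th T_l-row-block of A^l(f_N^{l−1}) equals a^l(f_n^{l−1}) and the (n, n) diagonal T_l × T_l block of B^l(f_N^{l−1}) equals b^l(f_n^{l−1}), for measurable a^l : ℝ^{T_{l−1}} → ℝ^{T_l × m_l} and symmetric-positive-definite-valued b^l : ℝ^{T_{l−1}} → ℝ^{T_l × T_l}. Then for all f_n^L ∈ ℝ^{T_L}: ∫ N(f_M; μ_M, S_M) ∏_{l=1}^{L} N(f_N^l; A^l(f_N^{l−1}) f_M^l, B^l(f_N^{l−1})) df_M ∏_{n'≠n} df_{n'}^L ∏_{l=1}^{L−1} df_N^l = ∫ [ ∫ N(f_M; μ_M, S_M) ∏_{l=1}^{L} N(f_n^l; a^l(f_n^{l−1}) f_M^l, b^l(f_n^{l−1})) df_M ] df_n^1 ⋯ df_n^{L−1}; i.e. the marginal density of f_n^L depends only on the datapoint-n rows of the conditionals and all other datapoints' latent outputs integrate out. -/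

import Mathlib

open Matrix MeasureTheory Real

noncomputable section

/-- The multivariate Gaussian density
`N(x; μ, S) = (2π)^{−d/2} (det S)^{−1/2} exp(−(1/2)(x−μ)ᵀ S⁻¹ (x−μ))`. -/
def gaussPDF {ι : Type*} [Fintype ι] [DecidableEq ι]
    (μ : ι → ℝ) (S : Matrix ι ι ℝ) (x : ι → ℝ) : ℝ :=
  (2 * Real.pi) ^ (-(Fintype.card ι : ℝ) / 2) * S.det ^ (-(1 : ℝ) / 2) *
    Real.exp (-(1 / 2 : ℝ) * ((x - μ) ⬝ᵥ (S⁻¹ *ᵥ (x - μ))))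

/-- Coordinates of the full `N`-point trajectory `(f_N^0, f_N^1, …, f_N^L)`; the number
of layers is `K + 1 ≥ 1` and layer outputs are indexed by `l : Fin (K + 2)`. -/
abbrev TrajIx (K N : ℕ) (T : Fin (K + 2) → ℕ) : Type :=
  (l : Fin (K + 2)) × (Fin N × Fin (T l))

/-- The trajectory coordinates that are integrated out on the left-hand side: everything
except the fixed input layer `0` and the final-layer output of data point `n`. -/
abbrev FreeIx (K N : ℕ) (T : Fin (K + 2) → ℕ) (n : Fin N) : Type :=
  {p : TrajIx K N T // p.1 ≠ 0 ∧ ¬(p.1 = Fin.last (K + 1) ∧ p.2.1 = n)}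

/-- Assemble the full `N`-point trajectory from the fixed input `f0`, the fixed
final-layer output `y` of data point `n`, and the free coordinates `z`. -/
def assembleN {K N : ℕ} {T : Fin (K + 2) → ℕ} (n : Fin N)
    (f0 : Fin N × Fin (T 0) → ℝ) (y : Fin (T (Fin.last (K + 1))) → ℝ)
    (z : FreeIx K N T n → ℝ) : TrajIx K N T → ℝ :=
  fun p =>
    if h0 : p.1 = 0 then f0 (p.2.1, Fin.cast (show T p.1 = T 0 by rw [h0]) p.2.2)
    else if hl : p.1 = Fin.last (K + 1) ∧ p.2.1 = n then
      y (Fin.cast (show T p.1 = T (Fin.last (K + 1)) by rw [hl.1]) p.2.2)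
    else z ⟨p, h0, hl⟩

/-- Coordinates of the single-point trajectory `(f_n^0, f_n^1, …, f_n^L)`. -/
abbrev PtIx (K : ℕ) (T : Fin (K + 2) → ℕ) : Type := (l : Fin (K + 2)) × Fin (T l)

/-- The single-point trajectory coordinates that are integrated out on the right-hand
side: the latent layers `1, …, L − 1`. -/
abbrev PtFreeIx (K : ℕ) (T : Fin (K + 2) → ℕ) : Type :=
  {p : PtIx K T // p.1 ≠ 0 ∧ p.1 ≠ Fin.last (K + 1)}

/-- Assemble the single-point trajectory of data point `n` from its fixed input `x0`,
its fixed final-layer output `y`, and the free latent coordinates `u`. -/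
def assemble1 {K : ℕ} {T : Fin (K + 2) → ℕ} (x0 : Fin (T 0) → ℝ)
    (y : Fin (T (Fin.last (K + 1))) → ℝ) (u : PtFreeIx K T → ℝ) : PtIx K T → ℝ :=
  fun p =>
    if h0 : p.1 = 0 then x0 (Fin.cast (show T p.1 = T 0 by rw [h0]) p.2)
    else if hl : p.1 = Fin.last (K + 1) then
      y (Fin.cast (show T p.1 = T (Fin.last (K + 1)) by rw [hl]) p.2)
    else u ⟨p, h0, hl⟩

open scoped ENNReal

lemma gaussPDF_nonneg {ι : Type*} [Fintype ι] [DecidableEq ι]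
    (μ : ι → ℝ) {S : Matrix ι ι ℝ} (hS : S.PosDef) (x : ι → ℝ) : 0 ≤ gaussPDF μ S x := by
  unfold gaussPDF
  have := hS.det_pos
  positivity

lemma gaussPDF_le {ι : Type*} [Fintype ι] [DecidableEq ι]
    (μ : ι → ℝ) {S : Matrix ι ι ℝ} (hS : S.PosDef) (x : ι → ℝ) :
    gaussPDF μ S x ≤ (2 * Real.pi) ^ (-(Fintype.card ι : ℝ) / 2) * S.det ^ (-(1 : ℝ) / 2) := by
  unfold gaussPDF
  have := hS.det_pos
  refine mul_le_of_le_one_right (by positivity) ?_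
  rw [Real.exp_le_one_iff]
  have := hS.inv.posSemidef.dotProduct_mulVec_nonneg (x - μ)
  simp only [star_trivial] at this
  linarith

lemma gaussPDF_measurable {ι α : Type*} [Fintype ι] [DecidableEq ι] [MeasurableSpace α]
    {μ : α → ι → ℝ} {S : α → Matrix ι ι ℝ} {x : α → ι → ℝ}
    (hμ : ∀ i, Measurable fun p => μ p i) (hS : ∀ i j, Measurable fun p => S p i j)
    (hx : ∀ i, Measurable fun p => x p i) :
    Measurable fun p => gaussPDF (μ p) (S p) (x p) := by
  have hdet : ∀ (M : α → Matrix ι ι ℝ), (∀ i j, Measurable fun p => M p i j) →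
      Measurable fun p => (M p).det := by
    intro M hM
    simp only [Matrix.det_apply]
    refine Finset.measurable_sum _ fun σ _ => ?_
    exact (Finset.measurable_prod _ fun i _ => hM _ _).const_smul _
  have hinv : ∀ i j, Measurable fun p => (S p)⁻¹ i j := by
    intro i j
    simp only [Matrix.inv_def, Matrix.smul_apply, Ring.inverse_eq_inv', smul_eq_mul,
      Matrix.adjugate_apply]
    refine (hdet _ hS).inv.mul (hdet _ fun a c => ?_)
    simp only [Matrix.updateRow_apply]
    by_cases h : a = j
    · simp [h]
    · simpa [h] using hS a c
  unfold gaussPDF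
  simp only [dotProduct, mulVec, Pi.sub_apply]
  refine (((hdet _ hS).pow_const _).const_mul _).mul ?_
  refine Real.measurable_exp.comp (Measurable.const_mul ?_ _)
  refine Finset.measurable_sum _ fun i _ => ((hx i).sub (hμ i)).mul ?_
  exact Finset.measurable_sum _ fun j _ => (hinv i j).mul ((hx j).sub (hμ j))

lemma gaussPDF_reindex {ι ρ : Type*} [Fintype ι] [DecidableEq ι] [Fintype ρ] [DecidableEq ρ]
    (e : ι ≃ ρ) (μ : ρ → ℝ) (S : Matrix ρ ρ ℝ) (x : ρ → ℝ) :
    gaussPDF (μ ∘ e) (S.submatrix e e) (x ∘ e) = gaussPDF μ S x := by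
  unfold gaussPDF
  rw [Fintype.card_congr e, Matrix.det_submatrix_equiv_self, Matrix.inv_submatrix_equiv]
  have h : (x ∘ e - μ ∘ e) = (x - μ) ∘ e := rfl
  rw [h, Matrix.submatrix_mulVec_equiv]
  have : (x - μ) ∘ e ∘ e.symm = x - μ := by ext; simp
  rw [Function.comp_assoc, this, ]
  congr 3
  simpa [dotProduct] using e.sum_comp (fun i => (x - μ) i * (S⁻¹ *ᵥ (x - μ)) i)

lemma gaussPDF_lintegral {ι : Type*} [Fintype ι] [DecidableEq ι]
    (μ : ι → ℝ) {S : Matrix ι ι ℝ} (hS : S.PosDef) :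
    ∫⁻ x : ι → ℝ, ENNReal.ofReal (gaussPDF μ S x) = 1 := by
  obtain ⟨R, hR⟩ : ∃ R : Matrix ι ι ℝ, S = Rᵀ * R := by
    open scoped MatrixOrder Matrix.Norms.L2Operator in
    obtain ⟨R, hR⟩ := CStarAlgebra.nonneg_iff_eq_star_mul_self.1 (Matrix.nonneg_iff_posSemidef.2 hS.posSemidef)
    exact ⟨R, by simpa [Matrix.star_eq_conjTranspose, Matrix.conjTranspose_eq_transpose_of_trivial] using hR⟩
  have hdet : S.det = R.det ^ 2 := by rw [hR, det_mul, det_transpose, sq]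
  have hpos := hS.det_pos
  have hR0 : R.det ≠ 0 := by
    intro h
    simp [hdet, h] at hpos
  set M : Matrix ι ι ℝ := (R⁻¹)ᵀ with hM
  have hMdet : M.det = R.det⁻¹ := by
    rw [hM, det_transpose, det_nonsing_inv, Ring.inverse_eq_inv']
  have hM0 : M.det ≠ 0 := by rw [hMdet]; exact inv_ne_zero hR0
  have hSi : S⁻¹ = Mᵀ * M := by
    rw [hR, Matrix.mul_inv_rev, hM, transpose_transpose, transpose_nonsing_inv]
  let G : (ι → ℝ) → ℝ := fun y => ∏ i, Real.exp (-(1/2) * y i ^ 2)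
  have hG : ∀ x, gaussPDF μ S x = (2 * Real.pi) ^ (-(Fintype.card ι : ℝ) / 2) * |R.det|⁻¹ *
      G (toLin' M (x - μ)) := by
    intro x
    unfold gaussPDF
    congr 1
    · congr 1
      rw [hdet, ← sq_abs, ← Real.rpow_natCast, ← Real.rpow_mul (abs_nonneg _)]
      norm_num [Real.rpow_neg_one]
    · simp only [G]
      rw [← Real.exp_sum, ← Finset.mul_sum, hSi, ← Matrix.mulVec_mulVec, dotProduct_mulVec,
        vecMul_transpose]
      simp [dotProduct, sq]
  have hGi : Integrable G := by
    refine Integrable.fintype_prod (f := fun _ v => Real.exp (-(1/2) * v ^ 2)) fun i => ?_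
    exact integrable_exp_neg_mul_sq (by norm_num)
  have hGint : ∫⁻ y, ENNReal.ofReal (G y) = ENNReal.ofReal ((2 * Real.pi) ^ ((Fintype.card ι : ℝ) / 2)) := by
    rw [← ofReal_integral_eq_lintegral_ofReal hGi
      (Filter.Eventually.of_forall fun y => by simp only [G]; positivity)]
    congr 1
    rw [integral_fintype_prod_volume_eq_pow (fun v => Real.exp (-(1/2) * v ^ 2)), integral_gaussian,
      Real.sqrt_eq_rpow, ← Real.rpow_natCast, ← Real.rpow_mul (by positivity)]
    congr 1 <;> ring
  simp_rw [hG]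
  have hGm : Measurable fun y => ENNReal.ofReal (G y) := by
    simp only [G]; fun_prop
  simp_rw [ENNReal.ofReal_mul (show 0 ≤ (2 * Real.pi) ^ (-(Fintype.card ι : ℝ) / 2) * |R.det|⁻¹ by positivity)]
  have hL : Measurable (toLin' M) := (LinearMap.continuous_of_finiteDimensional _).measurable
  have hGm2 : Measurable fun x => ENNReal.ofReal (G (toLin' M (x - μ))) :=
    hGm.comp (hL.comp (measurable_id.sub_const μ))
  rw [lintegral_const_mul _ hGm2,
    lintegral_sub_right_eq_self (fun x => ENNReal.ofReal (G (toLin' M x))) μ,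
    ← lintegral_map hGm hL, Real.map_matrix_volume_pi_eq_smul_volume_pi hM0,
    lintegral_smul_measure, hGint, hMdet, inv_inv, smul_eq_mul,
    ← ENNReal.ofReal_mul (by positivity), ← ENNReal.ofReal_mul (by positivity),
    ENNReal.ofReal_eq_one]
  have h1 : |R.det| ≠ 0 := abs_ne_zero.2 hR0
  have h2 : (2 * Real.pi) ^ (-(Fintype.card ι : ℝ) / 2) * (2 * Real.pi) ^ ((Fintype.card ι : ℝ) / 2) = 1 := by
    rw [← Real.rpow_add (by positivity)]
    ring_nf
    simp
  field_simp
  rw [← h2]; ring_nf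

lemma gaussPDF_sum {ι κ : Type*} [Fintype ι] [DecidableEq ι] [Fintype κ] [DecidableEq κ]
    (μ : ι ⊕ κ → ℝ) {S : Matrix (ι ⊕ κ) (ι ⊕ κ) ℝ} (hS : S.PosDef) (x : ι → ℝ) :
    ∃ (μ' : κ → ℝ) (S' : Matrix κ κ ℝ), S'.PosDef ∧ ∀ v,
      gaussPDF μ S (Sum.elim x v) =
        gaussPDF (μ ∘ Sum.inl) S.toBlocks₁₁ x * gaussPDF μ' S' v := by
  set A := S.toBlocks₁₁ with hA
  set B := S.toBlocks₁₂ with hB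
  set D := S.toBlocks₂₂ with hD
  have hSt : Sᵀ = S := by
    have := hS.isHermitian.eq
    rwa [Matrix.conjTranspose_eq_transpose_of_trivial] at this
  have hC : S = fromBlocks A B Bᵀ D := by
    have : S.toBlocks₂₁ = Bᵀ := by
      ext i j
      have := congrFun (congrFun hSt (Sum.inr i)) (Sum.inl j)
      simpa [hB, toBlocks₂₁, toBlocks₁₂] using this.symm
    rw [← this, hA, hB, hD, fromBlocks_toBlocks]
  have hApd : A.PosDef := hS.submatrix (e := Sum.inl) Sum.inl_injective
  have hAt : Aᵀ = A := by
    have := hApd.isHermitian.eq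
    rwa [Matrix.conjTranspose_eq_transpose_of_trivial] at this
  let _ : Invertible A := hApd.isUnit.invertible
  have hdet : S.det = A.det * (D - Bᵀ * A⁻¹ * B).det := by
    conv_lhs => rw [hC]
    rw [det_fromBlocks₁₁, invOf_eq_nonsing_inv]
  have hS' : (D - Bᵀ * A⁻¹ * B).PosDef := by
    have h1 : (D - Bᵀ * A⁻¹ * B).PosSemidef := by
      have := (PosDef.fromBlocks₁₁ B D hApd)
      simp only [Matrix.conjTranspose_eq_transpose_of_trivial] at this
      rw [← this, ← hC]
      exact hS.posSemidef
    rw [h1.posDef_iff_det_ne_zero]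
    intro h0
    have := hS.det_pos
    simp [hdet, h0] at this
  set S' := D - Bᵀ * A⁻¹ * B with hS'def
  let _ : Invertible S' := hS'.isUnit.invertible
  let _ : Invertible (D - Bᵀ * ⅟A * B) := by rw [invOf_eq_nonsing_inv]; exact hS'.isUnit.invertible
  let _ : Invertible (fromBlocks A B Bᵀ D) := by rw [← hC]; exact hS.isUnit.invertible
  have hAit : (A⁻¹)ᵀ = A⁻¹ := by rw [transpose_nonsing_inv, hAt]
  have hSi : S⁻¹ = fromBlocks (A⁻¹ + A⁻¹ * B * S'⁻¹ * Bᵀ * A⁻¹) (-(A⁻¹ * B * S'⁻¹))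
      (-(S'⁻¹ * Bᵀ * A⁻¹)) S'⁻¹ := by
    conv_lhs => rw [hC]
    rw [← invOf_eq_nonsing_inv, invOf_fromBlocks₁₁_eq]
    simp only [invOf_eq_nonsing_inv]
    rfl
  refine ⟨μ ∘ Sum.inr + (Bᵀ * A⁻¹) *ᵥ (x - μ ∘ Sum.inl), S', hS', fun v => ?_⟩
  unfold gaussPDF
  have hq : (Sum.elim x v - μ) ⬝ᵥ (S⁻¹ *ᵥ (Sum.elim x v - μ)) =
      (x - μ ∘ Sum.inl) ⬝ᵥ (A⁻¹ *ᵥ (x - μ ∘ Sum.inl)) +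
      (v - (μ ∘ Sum.inr + (Bᵀ * A⁻¹) *ᵥ (x - μ ∘ Sum.inl))) ⬝ᵥ
        (S'⁻¹ *ᵥ (v - (μ ∘ Sum.inr + (Bᵀ * A⁻¹) *ᵥ (x - μ ∘ Sum.inl)))) := by
    have h1 : Sum.elim x v - μ = Sum.elim (x - μ ∘ Sum.inl) (v - μ ∘ Sum.inr) := by
      ext (i | i) <;> simp
    rw [h1, ← sub_sub]
    generalize x - μ ∘ Sum.inl = p
    generalize v - μ ∘ Sum.inr = q
    have h2 : ∀ z : κ → ℝ, ((Bᵀ * A⁻¹) *ᵥ p) ⬝ᵥ z = p ⬝ᵥ ((A⁻¹ * B) *ᵥ z) := by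
      intro z
      rw [dotProduct_mulVec, ← vecMul_transpose, transpose_mul, transpose_transpose, hAit]
    rw [hSi, fromBlocks_mulVec]
    simp only [Sum.elim_comp_inl, Sum.elim_comp_inr, sumElim_dotProduct_sumElim, sub_dotProduct, h2,
      mulVec_sub, dotProduct_sub, add_mulVec, neg_mulVec, dotProduct_add, dotProduct_neg,
      mulVec_mulVec, Matrix.mul_assoc]
    ring
  rw [hq, hdet, Real.mul_rpow hApd.det_pos.le hS'.det_pos.le, Fintype.card_sum]
  have : (2 * Real.pi) ^ (-((Fintype.card ι + Fintype.card κ : ℕ) : ℝ) / 2) =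
    (2 * Real.pi) ^ (-(Fintype.card ι : ℝ) / 2) * (2 * Real.pi) ^ (-(Fintype.card κ : ℝ) / 2) := by
    rw [← Real.rpow_add (by positivity)]
    congr 1
    push_cast
    ring
  rw [this, mul_add, Real.exp_add]
  ring

lemma gaussPDF_marg {ι κ ρ : Type*} [Fintype ι] [DecidableEq ι] [Fintype κ] [DecidableEq κ]
    [Fintype ρ] [DecidableEq ρ] (e : ι ⊕ κ ≃ ρ)
    (μ : ρ → ℝ) {S : Matrix ρ ρ ℝ} (hS : S.PosDef) (x : ι → ℝ) (X : (κ → ℝ) → ρ → ℝ)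
    (hX1 : ∀ v i, X v (e (Sum.inl i)) = x i) (hX2 : ∀ v i, X v (e (Sum.inr i)) = v i) :
    ∫⁻ v : κ → ℝ, ENNReal.ofReal (gaussPDF μ S (X v)) =
      ENNReal.ofReal (gaussPDF (fun i => μ (e (Sum.inl i)))
        (Matrix.of fun i j => S (e (Sum.inl i)) (e (Sum.inl j))) x) := by
  have hS2 : (S.submatrix e e).PosDef := hS.submatrix e.injective
  obtain ⟨μ', S', hS', h⟩ := gaussPDF_sum (μ ∘ e) hS2 x
  have h3 : ∀ v, gaussPDF μ S (X v) = gaussPDF ((μ ∘ e) ∘ Sum.inl) (S.submatrix e e).toBlocks₁₁ x *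
      gaussPDF μ' S' v := by
    intro v
    rw [← h, ← gaussPDF_reindex e]
    congr 1
    ext (i | i)
    · simp [hX1]
    · simp [hX2]
  have h0 : (S.submatrix e e).toBlocks₁₁.PosDef := hS2.submatrix (e := Sum.inl) Sum.inl_injective
  simp_rw [h3, ENNReal.ofReal_mul (gaussPDF_nonneg _ h0 _)]
  have hm : Measurable fun v : κ → ℝ => ENNReal.ofReal (gaussPDF μ' S' v) :=
    ENNReal.measurable_ofReal.comp (gaussPDF_measurable
      (fun i => measurable_const) (fun i j => measurable_const) (fun i => measurable_pi_apply i))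
  rw [lintegral_const_mul _ hm, gaussPDF_lintegral _ hS', mul_one]
  rfl

lemma lmarg_reindex {δ β : Type*} [DecidableEq δ] [Fintype β] (s : Finset δ) (e : β ≃ s)
    (H : (δ → ℝ) → ℝ≥0∞) (x0 : δ → ℝ) (Φ : (β → ℝ) → δ → ℝ)
    (hin : ∀ z b, Φ z (e b) = z b) (hout : ∀ z p, p ∉ s → Φ z p = x0 p) :
    ∫⁻ z, H (Φ z) = lmarginal (fun _ => volume) s H x0 := by
  unfold lmarginal
  have := (volume_measurePreserving_piCongrLeft (fun _ : s => ℝ) e).lintegral_comp_emb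
    (MeasurableEquiv.measurableEmbedding _) (fun v => H (Function.updateFinset x0 s v))
  refine Eq.trans ?_ this
  refine lintegral_congr fun z => ?_
  congr 1
  ext p
  by_cases hp : p ∈ s
  · rw [Function.updateFinset, dif_pos hp]
    obtain ⟨b, hb⟩ := e.surjective ⟨p, hp⟩
    rw [← hb]
    have h2 : p = e b := by rw [hb]
    rw [h2, hin]
    exact (Equiv.piCongrLeft_apply_apply (fun _ : s => ℝ) e z b).symm
  · rw [Function.updateFinset, dif_neg hp, hout z p hp]

lemma lmarg_const_mul {δ : Type*} [DecidableEq δ] (s : Finset δ)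
    (f g : (δ → ℝ) → ℝ≥0∞) (hg : Measurable g)
    (hf : ∀ x x', (∀ p, p ∉ s → x p = x' p) → f x = f x') :
    lmarginal (fun _ => volume) s (fun x => f x * g x) =
      fun x => f x * lmarginal (fun _ => volume) s g x := by
  ext x
  unfold lmarginal
  have : ∀ v, f (Function.updateFinset x s v) = f x := by
    intro v
    apply hf
    intro p hp
    rw [Function.updateFinset, dif_neg hp]
  simp_rw [this]
  exact lintegral_const_mul _ (hg.comp measurable_updateFinset)

lemma lmarg_chain {δ : Type*} [DecidableEq δ] {L : ℕ} (V : Fin L → Finset δ)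
    (hV : ∀ l l', l ≠ l' → Disjoint (V l) (V l'))
    (g c : Fin L → (δ → ℝ) → ℝ≥0∞) (hg : ∀ l, Measurable (g l))
    (hgdep : ∀ l l', l < l' → ∀ x x', (∀ p, p ∉ V l' → x p = x' p) → g l x = g l x')
    (hcdep : ∀ l x x', (∀ p, (∀ l', p ∉ V l') → x p = x' p) → c l x = c l x')
    (hgc : ∀ l x, lmarginal (fun _ => volume) (V l) (g l) x = c l x)
    (s : Finset (Fin L)) :
    lmarginal (fun _ => volume) (s.biUnion V) (fun x => ∏ l ∈ s, g l x) =
      fun x => ∏ l ∈ s, c l x := by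
  induction s using Finset.induction_on_max with
  | empty => simp
  | insert a s ha ih =>
    have has : a ∉ s := fun h => lt_irrefl _ (ha a h)
    simp_rw [Finset.prod_insert has]
    have hm : Measurable fun x => ∏ l ∈ s, g l x := Finset.measurable_prod _ fun l _ => hg l
    have hm2 : Measurable fun x => g a x * ∏ l ∈ s, g l x := (hg a).mul hm
    rw [Finset.biUnion_insert, lmarginal_union' _ _ hm2]
    · have h1 : lmarginal (fun _ => volume) (V a) (fun x => g a x * ∏ l ∈ s, g l x) =
          fun x => c a x * ∏ l ∈ s, g l x := by
        have := lmarg_const_mul (V a) (fun x => ∏ l ∈ s, g l x) (g a) (hg a) (by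
          intro x x' h
          exact Finset.prod_congr rfl fun l hl => hgdep l a (ha l hl) x x' h)
        simp_rw [mul_comm (g a _), this, hgc, mul_comm]
      rw [h1, lmarg_const_mul _ _ _ hm, ih]
      intro x x' h
      refine hcdep a x x' fun p hp => h p ?_
      simp [hp]
    · rw [Finset.disjoint_biUnion_right]
      intro l hl
      exact hV _ _ (fun h => has (h ▸ hl))

set_option maxHeartbeats 4000000 in
/-- **Marginalisation of the latent-layer outputs of the other datapoints.**  If for
every layer the `n`-th row block of `A^l(f_N^{l−1})` is `a^l(f_n^{l−1})` and the
`(n, n)` diagonal block of `B^l(f_N^{l−1})` is `b^l(f_n^{l−1})`, then the marginal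
density of `f_n^L` depends only on the datapoint-`n` rows of the conditionals: all other
datapoints' latent outputs integrate out. -/
theorem marginalisation_of_other_datapoints (K N : ℕ) (hN : 1 ≤ N)
    (T : Fin (K + 2) → ℕ) (m : Fin (K + 1) → ℕ)
    (μM : ((l : Fin (K + 1)) × Fin (m l)) → ℝ)
    (SM : Matrix ((l : Fin (K + 1)) × Fin (m l)) ((l : Fin (K + 1)) × Fin (m l)) ℝ)
    (hSM : SM.PosDef)
    (A : ∀ l : Fin (K + 1), ((Fin N × Fin (T l.castSucc)) → ℝ) →
      Matrix (Fin N × Fin (T l.succ)) (Fin (m l)) ℝ)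
    (B : ∀ l : Fin (K + 1), ((Fin N × Fin (T l.castSucc)) → ℝ) →
      Matrix (Fin N × Fin (T l.succ)) (Fin N × Fin (T l.succ)) ℝ)
    (hAmeas : ∀ l i j, Measurable fun x => A l x i j)
    (hBmeas : ∀ l i j, Measurable fun x => B l x i j)
    (hBpd : ∀ l x, (B l x).PosDef)
    (a : ∀ l : Fin (K + 1), (Fin (T l.castSucc) → ℝ) →
      Matrix (Fin (T l.succ)) (Fin (m l)) ℝ)
    (b : ∀ l : Fin (K + 1), (Fin (T l.castSucc) → ℝ) →
      Matrix (Fin (T l.succ)) (Fin (T l.succ)) ℝ)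
    (haMeas : ∀ l i j, Measurable fun x => a l x i j)
    (hbMeas : ∀ l i j, Measurable fun x => b l x i j)
    (hbpd : ∀ l x, (b l x).PosDef)
    (n : Fin N)
    (hrow : ∀ l x i j, A l x (n, i) j = a l (fun i0 => x (n, i0)) i j)
    (hblock : ∀ l x i i', B l x (n, i) (n, i') = b l (fun i0 => x (n, i0)) i i')
    (f0 : Fin N × Fin (T 0) → ℝ) :
    ∀ y : Fin (T (Fin.last (K + 1))) → ℝ,
      (∫ w : (FreeIx K N T n ⊕ ((l : Fin (K + 1)) × Fin (m l))) → ℝ,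
          gaussPDF μM SM (fun k => w (Sum.inr k)) *
            ∏ l : Fin (K + 1),
              gaussPDF
                (A l (fun q => assembleN n f0 y (fun r => w (Sum.inl r)) ⟨l.castSucc, q⟩)
                    *ᵥ fun c => w (Sum.inr ⟨l, c⟩))
                (B l fun q => assembleN n f0 y (fun r => w (Sum.inl r)) ⟨l.castSucc, q⟩)
                (fun q => assembleN n f0 y (fun r => w (Sum.inl r)) ⟨l.succ, q⟩)) =
        ∫ u : PtFreeIx K T → ℝ,
          ∫ fM : ((l : Fin (K + 1)) × Fin (m l)) → ℝ,
            gaussPDF μM SM fM *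
              ∏ l : Fin (K + 1),
                gaussPDF
                  (a l (fun i => assemble1 (fun i0 => f0 (n, i0)) y u ⟨l.castSucc, i⟩)
                      *ᵥ fun c => fM ⟨l, c⟩)
                  (b l fun i => assemble1 (fun i0 => f0 (n, i0)) y u ⟨l.castSucc, i⟩)
                  (fun i => assemble1 (fun i0 => f0 (n, i0)) y u ⟨l.succ, i⟩) := by
  intro y
  -- abbreviations
  let g : (((l : Fin (K + 1)) × Fin (m l)) → ℝ) → Fin (K + 1) → (TrajIx K N T → ℝ) → ℝ := fun fM l x =>
    gaussPDF (A l (fun q => x ⟨l.castSucc, q⟩) *ᵥ fun c => fM ⟨l, c⟩)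
      (B l fun q => x ⟨l.castSucc, q⟩) (fun q => x ⟨l.succ, q⟩)
  let c : (((l : Fin (K + 1)) × Fin (m l)) → ℝ) → Fin (K + 1) → (PtIx K T → ℝ) → ℝ := fun fM l x =>
    gaussPDF (a l (fun i => x ⟨l.castSucc, i⟩) *ᵥ fun c => fM ⟨l, c⟩)
      (b l fun i => x ⟨l.castSucc, i⟩) (fun i => x ⟨l.succ, i⟩)
  have hg0 : ∀ fM l x, 0 ≤ g fM l x := fun fM l x => gaussPDF_nonneg _ (hBpd _ _) _
  have hc0 : ∀ fM l x, 0 ≤ c fM l x := fun fM l x => gaussPDF_nonneg _ (hbpd _ _) _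
  have hφ0 : ∀ fM, 0 ≤ gaussPDF μM SM fM := fun fM => gaussPDF_nonneg _ hSM _
  have hφm : Measurable fun fM => gaussPDF μM SM fM := gaussPDF_measurable
    (fun i => measurable_const) (fun i j => measurable_const) (fun i => measurable_pi_apply i)
  have hgm : ∀ l, Measurable fun p : (((l : Fin (K + 1)) × Fin (m l)) → ℝ) × (TrajIx K N T → ℝ) => g p.1 l p.2 := by
    intro l
    have hx : Measurable fun p : (((l : Fin (K + 1)) × Fin (m l)) → ℝ) × (TrajIx K N T → ℝ) =>
        fun q : Fin N × Fin (T l.castSucc) => p.2 ⟨l.castSucc, q⟩ :=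
      by fun_prop
    refine gaussPDF_measurable (fun i => ?_) (fun i j => (hBmeas l i j).comp hx)
      (fun i => by fun_prop)
    simp only [mulVec, dotProduct]
    exact Finset.measurable_sum _ fun j _ => ((hAmeas l i j).comp hx).mul
      (by fun_prop)
  have hcm : ∀ l, Measurable fun p : (((l : Fin (K + 1)) × Fin (m l)) → ℝ) × (PtIx K T → ℝ) => c p.1 l p.2 := by
    intro l
    have hx : Measurable fun p : (((l : Fin (K + 1)) × Fin (m l)) → ℝ) × (PtIx K T → ℝ) =>
        fun q : Fin (T l.castSucc) => p.2 ⟨l.castSucc, q⟩ :=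
      by fun_prop
    refine gaussPDF_measurable (fun i => ?_) (fun i j => (hbMeas l i j).comp hx)
      (fun i => by fun_prop)
    simp only [mulVec, dotProduct]
    exact Finset.measurable_sum _ fun j _ => ((haMeas l i j).comp hx).mul
      (by fun_prop)
  have hasN : Measurable fun z : FreeIx K N T n → ℝ => assembleN n f0 y z := by
    refine measurable_pi_lambda _ fun p => ?_
    unfold assembleN
    split_ifs
    · exact measurable_const
    · exact measurable_const
    · exact measurable_pi_apply _
  have has1 : Measurable fun u : PtFreeIx K T → ℝ => assemble1 (fun i0 => f0 (n, i0)) y u := by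
    refine measurable_pi_lambda _ fun p => ?_
    unfold assemble1
    split_ifs
    · exact measurable_const
    · exact measurable_const
    · exact measurable_pi_apply _
  -- the inner chain
  let V : Fin (K + 1) → Finset (TrajIx K N T) := fun l =>
    Finset.univ.filter fun p => p.1 = l.succ ∧ p.2.1 ≠ n
  let U : Finset (TrajIx K N T) := Finset.univ.filter fun p => p.1 ≠ 0 ∧ p.1 ≠ Fin.last (K + 1) ∧ p.2.1 = n
  let Fr : Finset (TrajIx K N T) := Finset.univ.filter fun p =>
    p.1 ≠ 0 ∧ ¬(p.1 = Fin.last (K + 1) ∧ p.2.1 = n)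
  have hmemV : ∀ l p, p ∈ V l ↔ p.1 = l.succ ∧ p.2.1 ≠ n := by intro l p; simp [V]
  have hmemU : ∀ p, p ∈ U ↔ p.1 ≠ 0 ∧ p.1 ≠ Fin.last (K + 1) ∧ p.2.1 = n := by
    intro p; simp [U]
  have hmemFr : ∀ p, p ∈ Fr ↔ p.1 ≠ 0 ∧ ¬(p.1 = Fin.last (K + 1) ∧ p.2.1 = n) := by
    intro p; simp only [Fr, Finset.mem_filter, Finset.mem_univ, true_and]
  let res : (TrajIx K N T → ℝ) → (PtIx K T → ℝ) := fun x p => x ⟨p.1, (n, p.2)⟩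
  have hmarg : ∀ fM l x, lmarginal (fun _ => volume) (V l)
      (fun x => ENNReal.ofReal (g fM l x)) x = ENNReal.ofReal (c fM l (res x)) := by
    intro fM l x
    let e : Fin (T l.succ) ⊕ V l ≃ Fin N × Fin (T l.succ) :=
      Equiv.ofBijective (Sum.elim (fun i => (n, i))
        (fun p => (p.1.2.1, Fin.cast (by rw [((hmemV l p.1).1 p.2).1]) p.1.2.2))) (by
        constructor
        · rintro (i | ⟨⟨l1, k1, i1⟩, h1⟩) (j | ⟨⟨l2, k2, i2⟩, h2⟩) h
          · simpa using h
          · obtain ⟨h2a, h2b⟩ := (hmemV _ _).1 h2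
            simp only [Sum.elim_inl, Sum.elim_inr, Prod.mk.injEq] at h
            exact absurd h.1.symm h2b
          · obtain ⟨h2a, h2b⟩ := (hmemV _ _).1 h1
            simp only [Sum.elim_inl, Sum.elim_inr, Prod.mk.injEq] at h
            exact absurd h.1 h2b
          · obtain ⟨h1a, h1b⟩ := (hmemV _ _).1 h1
            obtain ⟨h2a, h2b⟩ := (hmemV _ _).1 h2
            dsimp only at h1a h2a
            subst h1a
            subst h2a
            simp only [Sum.elim_inr, Prod.mk.injEq, Fin.cast_eq_self] at h
            obtain ⟨rfl, rfl⟩ := h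
            rfl
        · rintro ⟨k, i⟩
          by_cases hk : k = n
          · subst hk
            exact ⟨Sum.inl i, rfl⟩
          · exact ⟨Sum.inr ⟨⟨l.succ, k, i⟩, (hmemV _ _).2 ⟨rfl, hk⟩⟩, rfl⟩)
    have hprev : ∀ v, (fun q => Function.updateFinset x (V l) v ⟨l.castSucc, q⟩) =
        fun q => x ⟨l.castSucc, q⟩ := by
      intro v
      ext q
      rw [Function.updateFinset, dif_neg]
      rw [hmemV]
      intro h
      exact absurd h.1 (Fin.castSucc_lt_succ (i := l)).ne
    have := gaussPDF_marg e (A l (fun q => x ⟨l.castSucc, q⟩) *ᵥ fun c => fM ⟨l, c⟩)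
      (hBpd l fun q => x ⟨l.castSucc, q⟩) (fun i => x ⟨l.succ, (n, i)⟩)
      (fun v q => Function.updateFinset x (V l) v ⟨l.succ, q⟩) (by
        intro v i
        change Function.updateFinset x (V l) v ⟨l.succ, (n, i)⟩ = _
        rw [Function.updateFinset, dif_neg]
        rw [hmemV]
        simp) (by
        rintro v ⟨⟨l1, k1, i1⟩, h1⟩
        obtain ⟨h1a, h1b⟩ := (hmemV _ _).1 h1
        dsimp only at h1a
        subst h1a
        change Function.updateFinset x (V l) v ⟨l.succ, (k1, i1)⟩ = _
        rw [Function.updateFinset, dif_pos h1])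
    unfold lmarginal
    simp only [g]
    simp_rw [hprev]
    refine this.trans ?_
    simp only [c, res]
    congr 2
    · ext i
      change (A l (fun q => x ⟨l.castSucc, q⟩) *ᵥ fun c => fM ⟨l, c⟩) (n, i) = _
      simp only [mulVec, dotProduct, hrow]
    · ext i j
      exact hblock l _ i j
  have hgdep : ∀ fM l (x x' : TrajIx K N T → ℝ),
      (∀ q, x ⟨l.castSucc, q⟩ = x' ⟨l.castSucc, q⟩) → (∀ q, x ⟨l.succ, q⟩ = x' ⟨l.succ, q⟩) →
      g fM l x = g fM l x' := by
    intro fM l x x' h1 h2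
    simp only [g, h1, h2]
  have hcle : ∀ x, ∃ C : ℝ, ∀ fM, ∏ l, c fM l x ≤ C := fun x =>
    ⟨∏ l : Fin (K + 1), (2 * Real.pi) ^ (-(Fintype.card (Fin (T l.succ)) : ℝ) / 2) *
      (b l fun i => x ⟨l.castSucc, i⟩).det ^ (-(1 : ℝ) / 2), fun fM =>
      Finset.prod_le_prod (fun l _ => hc0 _ _ _) fun l _ => gaussPDF_le _ (hbpd _ _) _⟩
  change ∫ w : (FreeIx K N T n ⊕ ((l : Fin (K + 1)) × Fin (m l))) → ℝ, gaussPDF μM SM (fun k => w (Sum.inr k)) *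
      ∏ l, g (fun k => w (Sum.inr k)) l (assembleN n f0 y fun r => w (Sum.inl r)) =
    ∫ u : PtFreeIx K T → ℝ, ∫ fM : ((l : Fin (K + 1)) × Fin (m l)) → ℝ, gaussPDF μM SM fM *
      ∏ l, c fM l (assemble1 (fun i0 => f0 (n, i0)) y u)
  clear_value g c
  have hchain : ∀ fM, lmarginal (fun _ => volume) (Finset.univ.biUnion V)
      (fun x => ∏ l, ENNReal.ofReal (g fM l x)) = fun x => ∏ l, ENNReal.ofReal (c fM l (res x)) := by
    intro fM
    refine lmarg_chain V ?_ (fun l x => ENNReal.ofReal (g fM l x))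
      (fun l x => ENNReal.ofReal (c fM l (res x))) ?_ ?_ ?_ (hmarg fM) Finset.univ
    · intro l l' hl
      rw [Finset.disjoint_left]
      intro p hp hp'
      rw [hmemV] at hp hp'
      exact hl (Fin.succ_injective _ (hp.1.symm.trans hp'.1))
    · intro l
      exact ENNReal.measurable_ofReal.comp ((hgm l).comp measurable_prodMk_left)
    · intro l l' hl x x' h
      have h1 : ∀ q, x ⟨l.castSucc, q⟩ = x' ⟨l.castSucc, q⟩ := by
        intro q
        apply h
        rw [hmemV]
        intro h
        exact absurd h.1 (lt_trans (Fin.castSucc_lt_succ (i := l)) (Fin.succ_lt_succ_iff.2 hl)).ne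
      have h2 : ∀ q, x ⟨l.succ, q⟩ = x' ⟨l.succ, q⟩ := by
        intro q
        apply h
        rw [hmemV]
        intro h
        exact absurd h.1 (Fin.succ_lt_succ_iff.2 hl).ne
      exact congrArg ENNReal.ofReal (hgdep fM l x x' h1 h2)
    · intro l x x' h
      have : res x = res x' := by
        ext p
        apply h
        intro l'
        rw [hmemV]
        simp
      simp only [this]
  have hFr : Fr = U ∪ Finset.univ.biUnion V := by
    ext p
    rw [Finset.mem_union, Finset.mem_biUnion, hmemFr, hmemU]
    simp only [hmemV, Finset.mem_univ, true_and]
    constructor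
    · rintro ⟨h0, h1⟩
      by_cases hp : p.2.1 = n
      · exact Or.inl ⟨h0, fun h => h1 ⟨h, hp⟩, hp⟩
      · obtain ⟨l, hl⟩ := Fin.exists_succ_eq.2 h0
        exact Or.inr ⟨l, hl.symm, hp⟩
    · rintro (⟨h0, h1, h2⟩ | ⟨l, h1, h2⟩)
      · exact ⟨h0, fun h => h1 h.1⟩
      · exact ⟨by rw [h1]; exact Fin.succ_ne_zero _, fun h => h2 h.2⟩
  have hdisj : Disjoint U (Finset.univ.biUnion V) := by
    rw [Finset.disjoint_biUnion_right]
    intro l _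
    rw [Finset.disjoint_left]
    intro p hp hp'
    exact ((hmemV _ _).1 hp').2 ((hmemU _).1 hp).2.2
  have hz : ∀ fM, ∫⁻ z : FreeIx K N T n → ℝ, ∏ l, ENNReal.ofReal (g fM l (assembleN n f0 y z)) =
      ∫⁻ u : PtFreeIx K T → ℝ,
        ∏ l, ENNReal.ofReal (c fM l (assemble1 (fun i0 => f0 (n, i0)) y u)) := by
    intro fM
    let x0 : TrajIx K N T → ℝ := assembleN n f0 y 0
    have hm : Measurable fun x => ∏ l, ENNReal.ofReal (g fM l x) :=
      Finset.measurable_prod _ fun l _ =>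
        ENNReal.measurable_ofReal.comp ((hgm l).comp measurable_prodMk_left)
    rw [lmarg_reindex Fr (Equiv.subtypeEquivRight fun p => (hmemFr p).symm)
      (fun x => ∏ l, ENNReal.ofReal (g fM l x)) x0 (assembleN n f0 y), hFr,
      lmarginal_union _ _ hm hdisj, hchain]
    · let Φ : (PtFreeIx K T → ℝ) → TrajIx K N T → ℝ := fun u p =>
        if p.2.1 = n then assemble1 (fun i0 => f0 (n, i0)) y u ⟨p.1, p.2.2⟩ else x0 p
      let e : PtFreeIx K T ≃ U :=
        { toFun := fun q => ⟨⟨q.1.1, (n, q.1.2)⟩, (hmemU _).2 ⟨q.2.1, q.2.2, rfl⟩⟩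
          invFun := fun p => ⟨⟨p.1.1, p.1.2.2⟩, ((hmemU _).1 p.2).1, ((hmemU _).1 p.2).2.1⟩
          left_inv := fun q => rfl
          right_inv := by
            rintro ⟨⟨l, k, i⟩, h⟩
            have : k = n := ((hmemU _).1 h).2.2
            subst this
            rfl }
      rw [← lmarg_reindex U e (fun x => ∏ l, ENNReal.ofReal (c fM l (res x))) x0 Φ]
      · refine lintegral_congr fun u => ?_
        have : res (Φ u) = assemble1 (fun i0 => f0 (n, i0)) y u := by
          ext p
          simp [res, Φ]
        rw [this]
      · rintro z ⟨p, hp⟩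
        simp [Φ, e, assemble1, hp.1, hp.2]
      · rintro z ⟨l, k, i⟩ hp
        simp only [Φ]
        split_ifs with hk
        · subst hk
          rw [hmemU] at hp
          simp only [x0, assembleN, assemble1]
          by_cases h0 : l = 0
          · simp [h0]
          · by_cases h1 : l = Fin.last (K + 1)
            · simp [h1]
            · exact absurd ⟨h0, h1, rfl⟩ hp
        · rfl
    · rintro z ⟨p, hp⟩
      change assembleN n f0 y z p = _
      simp only [assembleN]
      rw [dif_neg hp.1, dif_neg hp.2]
    · intro z p hp
      rw [hmemFr] at hp
      simp only [x0, assembleN]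
      by_cases h0 : p.1 = 0
      · simp [h0]
      · rw [dif_neg h0, dif_neg h0]
        have : p.1 = Fin.last (K + 1) ∧ p.2.1 = n := by
          by_contra h
          exact hp ⟨h0, h⟩
        rw [dif_pos this, dif_pos this]
  -- measurability of the full integrands
  have hFm : Measurable fun p : (FreeIx K N T n → ℝ) × (((l : Fin (K + 1)) × Fin (m l)) → ℝ) =>
      gaussPDF μM SM p.2 * ∏ l, g p.2 l (assembleN n f0 y p.1) :=
    (hφm.comp measurable_snd).mul (Finset.measurable_prod _ fun l _ =>
      (hgm l).comp (measurable_snd.prodMk (hasN.comp measurable_fst)))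
  have hGm : Measurable fun p : (PtFreeIx K T → ℝ) × (((l : Fin (K + 1)) × Fin (m l)) → ℝ) =>
      gaussPDF μM SM p.2 * ∏ l, c p.2 l (assemble1 (fun i0 => f0 (n, i0)) y p.1) :=
    (hφm.comp measurable_snd).mul (Finset.measurable_prod _ fun l _ =>
      (hcm l).comp (measurable_snd.prodMk (has1.comp measurable_fst)))
  have hF0 : ∀ fM x, 0 ≤ gaussPDF μM SM fM * ∏ l, g fM l x := fun fM x =>
    mul_nonneg (hφ0 _) (Finset.prod_nonneg fun l _ => hg0 _ _ _)
  have hG0 : ∀ fM x, 0 ≤ gaussPDF μM SM fM * ∏ l, c fM l x := fun fM x =>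
    mul_nonneg (hφ0 _) (Finset.prod_nonneg fun l _ => hc0 _ _ _)
  have hcm1 : ∀ x, Measurable fun fM : ((l : Fin (K + 1)) × Fin (m l)) → ℝ => ∏ l, c fM l x := fun x =>
    Finset.measurable_prod _ fun l _ => (hcm l).comp (measurable_id.prodMk measurable_const)
  clear hmarg hchain hdisj hFr hmemFr hmemU hmemV
  have hinner : ∀ u : PtFreeIx K T → ℝ,
      ENNReal.ofReal (∫ fM : ((l : Fin (K + 1)) × Fin (m l)) → ℝ, gaussPDF μM SM fM *
        ∏ l, c fM l (assemble1 (fun i0 => f0 (n, i0)) y u)) =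
      ∫⁻ fM : ((l : Fin (K + 1)) × Fin (m l)) → ℝ, ENNReal.ofReal (gaussPDF μM SM fM *
        ∏ l, c fM l (assemble1 (fun i0 => f0 (n, i0)) y u)) := by
    intro u
    refine ofReal_integral_eq_lintegral_ofReal ?_ (Filter.Eventually.of_forall fun fM => hG0 _ _)
    have hφi : Integrable fun fM => gaussPDF μM SM fM := by
      refine ⟨hφm.aestronglyMeasurable, ?_⟩
      rw [hasFiniteIntegral_iff_ofReal (Filter.Eventually.of_forall hφ0),
        gaussPDF_lintegral _ hSM]
      exact ENNReal.one_lt_top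
    obtain ⟨C, hC⟩ := hcle (assemble1 (fun i0 => f0 (n, i0)) y u)
    refine Integrable.mul_bdd (c := C) hφi (hcm1 _).aestronglyMeasurable
      (Filter.Eventually.of_forall fun fM => ?_)
    rw [Real.norm_of_nonneg (Finset.prod_nonneg fun l _ => hc0 _ _ _)]
    exact hC fM
  have hmp := volume_measurePreserving_sumPiEquivProdPi (fun _ : FreeIx K N T n ⊕ ((l : Fin (K + 1)) × Fin (m l)) => ℝ)
  have hL := hmp.integral_comp (MeasurableEquiv.measurableEmbedding _)
    (fun p : (FreeIx K N T n → ℝ) × (((l : Fin (K + 1)) × Fin (m l)) → ℝ) =>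
      gaussPDF μM SM p.2 * ∏ l, g p.2 l (assembleN n f0 y p.1))
  refine hL.trans ?_
  rw [integral_eq_lintegral_of_nonneg_ae (Filter.Eventually.of_forall fun p => hF0 _ _)
      hFm.aestronglyMeasurable,
    integral_eq_lintegral_of_nonneg_ae
      (Filter.Eventually.of_forall fun u => integral_nonneg fun fM => hG0 _ _)
      (hGm.stronglyMeasurable.integral_prod_right'.aestronglyMeasurable)]
  congr 1
  simp_rw [hinner]
  have hFm' := hFm.ennreal_ofReal
  have hGm' := hGm.ennreal_ofReal
  rw [Measure.volume_eq_prod, lintegral_prod_symm' _ hFm']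
  refine Eq.trans ?_ (lintegral_lintegral_swap hGm'.aemeasurable).symm
  refine lintegral_congr fun fM => ?_
  simp_rw [ENNReal.ofReal_mul (hφ0 _)]
  have e1 : ∀ x, ENNReal.ofReal (∏ l, g fM l x) = ∏ l, ENNReal.ofReal (g fM l x) := fun x =>
    ENNReal.ofReal_prod_of_nonneg fun l _ => hg0 _ _ _
  have e2 : ∀ x, ENNReal.ofReal (∏ l, c fM l x) = ∏ l, ENNReal.ofReal (c fM l x) := fun x =>
    ENNReal.ofReal_prod_of_nonneg fun l _ => hc0 _ _ _
  simp_rw [e1, e2]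
  rw [lintegral_const_mul' _ _ ENNReal.ofReal_ne_top, lintegral_const_mul' _ _ ENNReal.ofReal_ne_top,
    hz]

end
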